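/- Let γ : [0,a] → M be a g*-geodesic with γ(0) ∈ V⁻¹(E), γ((0,a]) ⊂ Ω_E, parameterized by arc length, i.e. ½ g(γ̇,γ̇)(E−V(γ)) ≡ 1. Then there exists a positive constant C₀ such that γ̇(s)/‖γ̇(s)‖ = −∇V(γ(s))/‖∇V(γ(s))‖ + Σ(s) with ‖Σ(s)‖ ≤ C₀ s^{1/3} for all s ∈ (0,a]. -/

import Mathlib

open MeasureTheory Set Matrix Filter Topology

namespace JacobiPaper

noncomputable section

/-- Points/vectors of the ambient space `ℝ^N` in which the manifold `M` is
topologically embedded as an open subset. -/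
abbrev Vec (N : ℕ) := Fin N → ℝ

variable {N : ℕ}

/-- The inner product determined by a field of matrices `g` at the point `x`. -/
def gP (g : Vec N → Matrix (Fin N) (Fin N) ℝ) (x v w : Vec N) : ℝ :=
  ∑ i, ∑ j, g x i j * v i * w j

/-- The Euclidean gradient (the differential, as a vector). -/
def euclGrad (V : Vec N → ℝ) (x : Vec N) : Vec N :=
  fun i => fderiv ℝ V x (Pi.single i 1)

/-- The setting of the paper: a `C³` Riemannian metric `g` on a neighborhood `U` of
the compact sublevel `V⁻¹((-∞,E])`, with `V` of class `C²` there and `E` a regular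
value of `V`. -/
structure Setting (N : ℕ) where
  g : Vec N → Matrix (Fin N) (Fin N) ℝ
  V : Vec N → ℝ
  E : ℝ
  U : Set (Vec N)
  hdim : 1 ≤ N
  hU : IsOpen U
  hsub : {x | V x ≤ E} ⊆ U
  hgC : ∀ i j, ContDiffOn ℝ 3 (fun x => g x i j) U
  hgsymm : ∀ x ∈ U, ∀ i j, g x i j = g x j i
  hgpos : ∀ x ∈ U, ∀ v : Vec N, v ≠ 0 → 0 < gP g x v v
  hVC : ContDiffOn ℝ 2 V U
  hreg : ∀ x, V x = E → euclGrad V x ≠ 0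
  hcomp : IsCompact {x : Vec N | V x ≤ E}

namespace Setting

variable (S : Setting N)

/-- The Riemannian inner product `g_x(v,w)`. -/
def prod (x v w : Vec N) : ℝ := gP S.g x v w

/-- The Riemannian norm `‖v‖_x`. -/
def gnorm (x v : Vec N) : ℝ := Real.sqrt (S.prod x v v)

/-- The gradient of `V` with respect to `g`. -/
def grad (x : Vec N) : Vec N := (S.g x)⁻¹ *ᵥ euclGrad S.V x

/-- Christoffel symbols `Γ^k_{ij}` of the Levi-Civita connection of `g`. -/
def christoffel (x : Vec N) (k i j : Fin N) : ℝ :=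
  (1/2) * ∑ l, (S.g x)⁻¹ k l *
    (fderiv ℝ (fun y => S.g y l j) x (Pi.single i 1)
     + fderiv ℝ (fun y => S.g y l i) x (Pi.single j 1)
     - fderiv ℝ (fun y => S.g y i j) x (Pi.single l 1))

/-- Covariant derivative, along the curve `q` with velocity `q'`, of the vector field
`ξ` whose (pointwise) derivative is `ξ'`. -/
def covD (q q' ξ ξ' : ℝ → Vec N) (s : ℝ) : Vec N :=
  fun k => ξ' s k + ∑ i, ∑ j, S.christoffel (q s) k i j * q' s i * ξ s j

/-- The Riemann curvature tensor `R(u,v)w` of `g` at `x`. -/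
def curv (x u v w : Vec N) : Vec N :=
  fun l => ∑ i, ∑ j, ∑ k, u i * v j * w k *
    (fderiv ℝ (fun y => S.christoffel y l j k) x (Pi.single i 1)
     - fderiv ℝ (fun y => S.christoffel y l i k) x (Pi.single j 1)
     + ∑ m, (S.christoffel x l i m * S.christoffel x m j k
             - S.christoffel x l j m * S.christoffel x m i k))

/-- The Hessian operator of `V` with respect to `g`: `ξ ↦ ∇_ξ ∇V`. -/
def hessV (x ξ : Vec N) : Vec N :=
  fun k => ∑ i, ξ i * (fderiv ℝ (fun y => S.grad y k) x (Pi.single i 1)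
    + ∑ j, S.christoffel x k i j * S.grad x j)

/-- The Jacobi-metric geodesic equation (eq. (2.5) of the paper) at the instant `s`,
for a curve `x` with derivative `x'` and second derivative `x''`. -/
def GeoEqAt (x x' x'' : ℝ → Vec N) (s : ℝ) : Prop :=
  ∀ k, (S.E - S.V (x s)) * S.covD x x' x' x'' s k
    - S.prod (x s) (S.grad (x s)) (x' s) * x' s k
    + (1/2) * S.prod (x s) (x' s) (x' s) * S.grad (x s) k = 0

end Setting

/-- `q` is of class `C²` on `I` with first derivative `q'` and second derivative `q''`. -/
def C2OnWith (q q' q'' : ℝ → Vec N) (I : Set ℝ) : Prop :=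
  (∀ t ∈ I, HasDerivWithinAt q (q' t) I t) ∧
  (∀ t ∈ I, HasDerivWithinAt q' (q'' t) I t) ∧
  ContinuousOn q'' I

/-- `x` belongs to the Sobolev space `H¹([a,b],ℝ^N)`: it is absolutely continuous
(primitive of its a.e. derivative) with square-integrable derivative. -/
def H1On (x : ℝ → Vec N) (a b : ℝ) : Prop :=
  ContinuousOn x (Icc a b) ∧
  IntegrableOn (deriv x) (Icc a b) ∧
  IntegrableOn (fun s => ‖deriv x s‖ ^ 2) (Icc a b) ∧
  ∀ t ∈ Icc a b, x t = x a + ∫ s in a..t, deriv x s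

/-- `x` is absolutely continuous on `[a,b]`. -/
def ACOn (x : ℝ → Vec N) (a b : ℝ) : Prop :=
  ContinuousOn x (Icc a b) ∧
  IntegrableOn (deriv x) (Icc a b) ∧
  ∀ t ∈ Icc a b, x t = x a + ∫ s in a..t, deriv x s

namespace Setting

variable (S : Setting N)

/-- The weak (distributional) form (eq. (2.7)) of the Jacobi geodesic equation on `(a,b)`,
tested against all `ξ ∈ C^∞_0((a,b),ℝ^N)`. -/
def WeakGeo (x : ℝ → Vec N) (a b : ℝ) : Prop :=
  ∀ ξ : ℝ → Vec N, ContDiff ℝ (⊤ : ℕ∞) ξ → tsupport ξ ⊆ Ioo a b →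
    (∫ s in a..b,
      ((S.E - S.V (x s)) * S.prod (x s) (deriv x s) (S.covD x (deriv x) ξ (deriv ξ) s)
        - (1/2) * S.prod (x s) (deriv x s) (deriv x s)
            * S.prod (x s) (S.grad (x s)) (ξ s))) = 0

/-- The space `X_Q`. -/
def InXQ (Q : Vec N) (x : ℝ → Vec N) : Prop :=
  H1On x 0 1 ∧ S.V (x 0) = S.E ∧ (∀ s ∈ Ioc (0:ℝ) 1, S.V (x s) < S.E) ∧ x 1 = Q

/-- The Jacobi length functional `L_V`. -/
def LV (x : ℝ → Vec N) : ℝ :=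
  ∫ s in (0:ℝ)..1,
    Real.sqrt ((1/2) * (S.E - S.V (x s)) * S.prod (x s) (deriv x s) (deriv x s))

/-- The distance `d_V(Q)` from `Q` to the boundary of the potential well. -/
def dV (Q : Vec N) : ℝ := sInf {r | ∃ x, S.InXQ Q x ∧ r = S.LV x}

/-- `γ : [0,a] → M` is a `g_*`-geodesic starting at `V⁻¹(E)`, staying in the potential
well for `s > 0`, parameterized by arc length (`½ g(γ̇,γ̇)(E−V(γ)) ≡ 1`). -/
def IsBdryGeo (γ : ℝ → Vec N) (a : ℝ) : Prop :=
  0 < a ∧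
  ContinuousOn γ (Icc 0 a) ∧
  (∀ s ∈ Ioc (0:ℝ) a, ContDiffAt ℝ 2 γ s) ∧
  S.V (γ 0) = S.E ∧
  (∀ s ∈ Ioc (0:ℝ) a, S.V (γ s) < S.E) ∧
  (∀ s ∈ Ioc (0:ℝ) a, S.GeoEqAt γ (deriv γ) (deriv (deriv γ)) s) ∧
  (∀ s ∈ Ioc (0:ℝ) a, (1/2) * S.prod (γ s) (deriv γ s) (deriv γ s) * (S.E - S.V (γ s)) = 1)

/-- The index form `I_{s₁,s₂}(ξ,η)` along `γ`. -/
def idxForm (γ : ℝ → Vec N) (s₁ s₂ : ℝ) (ξ η : ℝ → Vec N) : ℝ :=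
  ∫ u in s₁..s₂,
    ((S.E - S.V (γ u)) *
        (S.prod (γ u) (S.covD γ (deriv γ) ξ (deriv ξ) u) (S.covD γ (deriv γ) η (deriv η) u)
          + S.prod (γ u) (S.curv (γ u) (deriv γ u) (ξ u) (deriv γ u)) (η u))
      - (S.prod (γ u) (S.grad (γ u)) (ξ u)
            * S.prod (γ u) (deriv γ u) (S.covD γ (deriv γ) η (deriv η) u)
          + S.prod (γ u) (deriv γ u) (S.covD γ (deriv γ) ξ (deriv ξ) u)
            * S.prod (γ u) (S.grad (γ u)) (η u)
          + (1/2) * S.prod (γ u) (S.hessV (γ u) (ξ u)) (η u)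
            * S.prod (γ u) (deriv γ u) (deriv γ u)))

/-- Membership in the space `Y_s^W`: absolutely continuous vector fields along `γ|[0,s]`
with finite weighted norm, with `ξ(0) ∈ T_{γ(0)}V⁻¹(E)` and `ξ(s) = W`. -/
def InY (γ : ℝ → Vec N) (s : ℝ) (W : Vec N) (ξ : ℝ → Vec N) : Prop :=
  ACOn ξ 0 s ∧
  IntegrableOn (fun u => (S.E - S.V (γ u)) *
      S.prod (γ u) (S.covD γ (deriv γ) ξ (deriv ξ) u)
        (S.covD γ (deriv γ) ξ (deriv ξ) u)) (Icc 0 s) ∧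
  S.prod (γ 0) (S.grad (γ 0)) (ξ 0) = 0 ∧
  ξ s = W

/-- The weighted squared norm `⟨ξ,ξ⟩_{0,s}`. -/
def wNormSq (γ : ℝ → Vec N) (s : ℝ) (ξ : ℝ → Vec N) : ℝ :=
  ∫ u in (0:ℝ)..s, (S.E - S.V (γ u)) *
    S.prod (γ u) (S.covD γ (deriv γ) ξ (deriv ξ) u) (S.covD γ (deriv γ) ξ (deriv ξ) u)

/-- The Jacobi field equation (eq. (4.9)) at the instant `u`. -/
def JacobiEqAt (γ ξ : ℝ → Vec N) (u : ℝ) : Prop :=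
  ∀ k, - deriv (fun t => (S.E - S.V (γ t)) * S.covD γ (deriv γ) ξ (deriv ξ) t k) u
      + (S.E - S.V (γ u)) * S.curv (γ u) (deriv γ u) (ξ u) (deriv γ u) k
      + deriv (fun t => S.prod (γ t) (S.grad (γ t)) (ξ t) * deriv γ t k) u
      - S.prod (γ u) (deriv γ u) (S.covD γ (deriv γ) ξ (deriv ξ) u) * S.grad (γ u) k
      - (1/2) * S.prod (γ u) (deriv γ u) (deriv γ u) * S.hessV (γ u) (ξ u) k = 0

/-- `ξ` is a Jacobi field along `γ|[0,s]`: of class `C⁰([0,s]) ∩ C²((0,s])` and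
solving the Jacobi equation on `(0,s]`. -/
def IsJacobi (γ ξ : ℝ → Vec N) (s : ℝ) : Prop :=
  ContinuousOn ξ (Icc 0 s) ∧ (∀ u ∈ Ioc (0:ℝ) s, ContDiffAt ℝ 2 ξ u) ∧
  ∀ u ∈ Ioc (0:ℝ) s, S.JacobiEqAt γ ξ u

/-- The boundary condition (eq. (4.10)): the continuous extension at `s = 0` of
`(E−V(γ))Dξ/ds − g(∇V(γ),ξ)γ̇` is parallel to `∇V(γ(0))`. -/
def BdryCond (γ ξ : ℝ → Vec N) : Prop :=
  ∃ c : ℝ, Tendsto (fun u => (fun k => (S.E - S.V (γ u)) * S.covD γ (deriv γ) ξ (deriv ξ) u k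
      - S.prod (γ u) (S.grad (γ u)) (ξ u) * deriv γ u k))
    (nhdsWithin 0 (Ioi 0)) (nhds (c • S.grad (γ 0)))

end Setting

/-- The family `ξ : Fin n → (ℝ → Vec N)` is linearly independent as fields on `I`. -/
def IndepOn {n : ℕ} (I : Set ℝ) (ξ : Fin n → ℝ → Vec N) : Prop :=
  ∀ c : Fin n → ℝ, (∀ u ∈ I, (∑ i, c i • ξ i) u = 0) → c = 0

/-- The index of the quadratic form `B` on the class `C` of vector fields (regarded as
fields on `I`) is at least `n`. -/
def IndexGe {N : ℕ} (B : (ℝ → Vec N) → ℝ) (C : (ℝ → Vec N) → Prop) (I : Set ℝ) (n : ℕ) : Prop :=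
  ∃ ξ : Fin n → ℝ → Vec N, (∀ i, C (ξ i)) ∧ IndepOn I ξ ∧
    ∀ c : Fin n → ℝ, c ≠ 0 → B (∑ i, c i • ξ i) < 0

/-- The index of the quadratic form `B` on the class `C` equals `n`. -/
def IndexEq {N : ℕ} (B : (ℝ → Vec N) → ℝ) (C : (ℝ → Vec N) → Prop) (I : Set ℝ) (n : ℕ) : Prop :=
  IndexGe B C I n ∧ ¬ IndexGe B C I (n+1)

/-- The nullity of a bilinear form `B` on the class `C` is at least `n`. -/
def NullGe {N : ℕ} (B : (ℝ → Vec N) → (ℝ → Vec N) → ℝ) (C : (ℝ → Vec N) → Prop)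
    (I : Set ℝ) (n : ℕ) : Prop :=
  ∃ ξ : Fin n → ℝ → Vec N, (∀ i, C (ξ i)) ∧ IndepOn I ξ ∧
    ∀ i, ∀ η, C η → B (ξ i) η = 0

/-- The nullity of a bilinear form `B` on the class `C` equals `n`. -/
def NullEq {N : ℕ} (B : (ℝ → Vec N) → (ℝ → Vec N) → ℝ) (C : (ℝ → Vec N) → Prop)
    (I : Set ℝ) (n : ℕ) : Prop :=
  NullGe B C I n ∧ ¬ NullGe B C I (n+1)

namespace Setting

variable (S : Setting N)

/-- `ξ` is a (nontrivial candidate) field realizing conjugacy at `γ(s)`: a Jacobi field in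
`Y_s` satisfying the boundary condition (4.10). -/
def ConjField (γ : ℝ → Vec N) (s : ℝ) (ξ : ℝ → Vec N) : Prop :=
  S.InY γ s 0 ξ ∧ S.IsJacobi γ ξ s ∧ S.BdryCond γ ξ

/-- `γ(s)` is conjugate to `V⁻¹(E)` with multiplicity at least `n`. -/
def MultGe (γ : ℝ → Vec N) (s : ℝ) (n : ℕ) : Prop :=
  ∃ ξ : Fin n → ℝ → Vec N, (∀ i, S.ConjField γ s (ξ i)) ∧ IndepOn (Icc 0 s) ξ

/-- `γ(s)` is conjugate to `V⁻¹(E)`. -/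
def IsConj (γ : ℝ → Vec N) (s : ℝ) : Prop := S.MultGe γ s 1

/-- `γ(s)` is conjugate to `V⁻¹(E)` with multiplicity exactly `n`. -/
def Mult (γ : ℝ → Vec N) (s : ℝ) (n : ℕ) : Prop :=
  S.MultGe γ s n ∧ ¬ S.MultGe γ s (n+1)

end Setting


theorem nonneg_of_deriv_nonneg_of_tendsto_zero {φ φ' : ℝ → ℝ} {δ : ℝ}
    (hφ : ∀ s ∈ Ioc (0 : ℝ) δ, HasDerivAt φ (φ' s) s)
    (hφ' : ∀ s ∈ Ioc (0 : ℝ) δ, 0 ≤ φ' s)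
    (h0 : Tendsto φ (𝓝[>] 0) (𝓝 0)) {s : ℝ} (hs : s ∈ Ioc (0 : ℝ) δ) : 0 ≤ φ s := by
  have hmono : MonotoneOn φ (Ioc 0 δ) := by
    refine monotoneOn_of_deriv_nonneg (convex_Ioc 0 δ)
      (fun t ht => (hφ t ht).continuousAt.continuousWithinAt) ?_ ?_
    · intro t ht
      exact (hφ t (interior_subset ht)).differentiableAt.differentiableWithinAt
    · intro t ht
      rw [(hφ t (interior_subset ht)).deriv]
      exact hφ' t (interior_subset ht)
  refine le_of_tendsto h0 ?_
  filter_upwards [Ioo_mem_nhdsGT hs.1] with t ht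
  exact hmono ⟨ht.1, ht.2.le.trans hs.2⟩ hs ht.2.le

theorem boundary_layer_estimates {w f P P' b : ℝ → ℝ} {δ c C : ℝ} (hc : 0 < c) (hC : 0 < C)
    (hw : ∀ s ∈ Ioc (0 : ℝ) δ, 0 < w s)
    (hw' : ∀ s ∈ Ioc (0 : ℝ) δ, HasDerivAt w (f s / w s) s)
    (hf' : ∀ s ∈ Ioc (0 : ℝ) δ, HasDerivAt f (P s / w s - b s) s)
    (hP' : ∀ s ∈ Ioc (0 : ℝ) δ, HasDerivAt P (P' s) s)
    (hb : ∀ s ∈ Ioc (0 : ℝ) δ, |b s| ≤ C)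
    (hPb : ∀ s ∈ Ioc (0 : ℝ) δ, P' s ^ 2 ≤ C / w s)
    (hfb : ∀ s ∈ Ioc (0 : ℝ) δ, f s ^ 2 ≤ C * w s)
    (hPc : ∀ s ∈ Ioc (0 : ℝ) δ, c ≤ P s)
    (hwc : ∀ s ∈ Ioc (0 : ℝ) δ, C * w s ≤ c / 2)
    (hw0 : Tendsto w (𝓝[>] 0) (𝓝 0))
    {P₀ : ℝ} (hP0 : Tendsto P (𝓝[>] 0) (𝓝 P₀)) :
    ∃ A > (0 : ℝ), ∀ s ∈ Ioc (0 : ℝ) δ,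
      0 ≤ f s ∧ 2 * w s * P s - A * w s ^ 2 ≤ f s ^ 2 ∧ Real.sqrt (w s) ^ 3 ≤ A * s := by
  rcases le_or_gt δ 0 with hδ | hδ
  · exact ⟨1, one_pos, fun s hs => absurd (hs.1.trans_le hs.2) (not_lt.2 hδ)⟩
  have hf0 : Tendsto f (𝓝[>] 0) (𝓝 0) := by
    have hlim : Tendsto (fun s => Real.sqrt (C * w s)) (𝓝[>] 0) (𝓝 0) := by
      simpa using (hw0.const_mul C).sqrt
    refine squeeze_zero_norm' ?_ hlim
    filter_upwards [Ioc_mem_nhdsGT hδ] with s hs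
    exact Real.abs_le_sqrt (hfb s hs)
  have hwf' : ∀ s ∈ Ioc (0 : ℝ) δ, c / 2 ≤ w s * (P s / w s - b s) := by
    intro s hs
    have h1 := hw s hs
    have h2 : w s * (P s / w s - b s) = P s - w s * b s := by field_simp
    have h3 : w s * b s ≤ w s * C :=
      mul_le_mul_of_nonneg_left ((le_abs_self _).trans (hb s hs)) h1.le
    rw [h2]
    linarith [hPc s hs, hwc s hs]
  have hf : ∀ s ∈ Ioc (0 : ℝ) δ, 0 ≤ f s := fun s hs =>
    nonneg_of_deriv_nonneg_of_tendsto_zero hf' (fun t ht => by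
      have h1 := hw t ht
      have h2 := hwf' t ht
      by_contra! h
      nlinarith) hf0 hs
  have hfw : ∀ s ∈ Ioc (0 : ℝ) δ, c * w s ≤ f s ^ 2 := by
    intro s hs
    suffices 0 ≤ f s ^ 2 - c * w s by linarith
    refine nonneg_of_deriv_nonneg_of_tendsto_zero (φ := fun t => f t ^ 2 - c * w t)
      (fun t ht => ((hf' t ht).pow 2).sub ((hw' t ht).const_mul c)) (fun t ht => ?_) ?_ hs
    · have h1 := hw t ht
      have h2 := hwf' t ht
      have h3 : 0 ≤ f t / w t := div_nonneg (hf t ht) h1.le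
      have h4 : f t = w t * (f t / w t) := by field_simp
      have h5 : (2 : ℕ) * f t ^ (2 - 1) * (P t / w t - b t) - c * (f t / w t)
          = (f t / w t) * (2 * (w t * (P t / w t - b t)) - c) := by
        push_cast
        field_simp
      rw [h5]
      exact mul_nonneg h3 (by linarith)
    · simpa using (hf0.pow 2).sub (hw0.const_mul c)
  obtain ⟨K, hK0, hK⟩ : ∃ K > (0 : ℝ), ∀ s ∈ Ioc (0 : ℝ) δ, w s * |P' s| ≤ K * f s := by
    refine ⟨Real.sqrt (C / c), Real.sqrt_pos.2 (div_pos hC hc), fun s hs => ?_⟩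
    have h1 := hw s hs
    refine abs_le_of_sq_le_sq' ?_ (mul_nonneg (Real.sqrt_nonneg _) (hf s hs)) |>.2
    rw [mul_pow, mul_pow, sq_abs, Real.sq_sqrt (div_pos hC hc).le]
    calc w s ^ 2 * P' s ^ 2 ≤ w s ^ 2 * (C / w s) := by gcongr; exact hPb s hs
      _ = C / c * (c * w s) := by field_simp
      _ ≤ C / c * f s ^ 2 := by gcongr; exact hfw s hs
  have hsq : ∀ s ∈ Ioc (0 : ℝ) δ, 2 * w s * P s - (C + K) * w s ^ 2 ≤ f s ^ 2 := by
    intro s hs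
    suffices 0 ≤ f s ^ 2 - 2 * (w s * P s) + (C + K) * w s ^ 2 by linarith
    refine nonneg_of_deriv_nonneg_of_tendsto_zero
      (φ := fun t => f t ^ 2 - 2 * (w t * P t) + (C + K) * w t ^ 2)
      (fun t ht => (((hf' t ht).pow 2).sub (((hw' t ht).mul (hP' t ht)).const_mul 2)).add
        (((hw' t ht).pow 2).const_mul (C + K))) (fun t ht => ?_) ?_ hs
    · have h1 := hw t ht
      have h2 := hf t ht
      have h3 : f t * b t ≤ f t * C :=
        mul_le_mul_of_nonneg_left ((le_abs_self _).trans (hb t ht)) h2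
      have h4 : w t * P' t ≤ K * f t :=
        (mul_le_mul_of_nonneg_left (le_abs_self _) h1.le).trans (hK t ht)
      have h5 : (2 : ℕ) * f t ^ (2 - 1) * (P t / w t - b t)
          - 2 * (f t / w t * P t + w t * P' t)
          + (C + K) * ((2 : ℕ) * w t ^ (2 - 1) * (f t / w t))
          = 2 * (f t * C - f t * b t) + 2 * (K * f t - w t * P' t) := by
        push_cast
        field_simp
        ring
      rw [h5]
      linarith
    · simpa using ((hf0.pow 2).sub ((hw0.mul hP0).const_mul 2)).add
        ((hw0.pow 2).const_mul (C + K))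
  have hcub : ∀ s ∈ Ioc (0 : ℝ) δ, Real.sqrt (w s) ^ 3 ≤ 3 / 2 * Real.sqrt C * s := by
    intro s hs
    suffices 0 ≤ 3 / 2 * Real.sqrt C * s - Real.sqrt (w s) ^ 3 by linarith
    refine nonneg_of_deriv_nonneg_of_tendsto_zero
      (φ := fun t => 3 / 2 * Real.sqrt C * t - Real.sqrt (w t) ^ 3)
      (fun t ht => ((hasDerivAt_id t).const_mul (3 / 2 * Real.sqrt C)).sub
        (((hw' t ht).sqrt (hw t ht).ne').pow 3)) (fun t ht => ?_) ?_ hs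
    · have h1 := hw t ht
      have h2 : f t ≤ Real.sqrt C * Real.sqrt (w t) := by
        rw [← Real.sqrt_mul hC.le]
        exact (le_abs_self _).trans (Real.abs_le_sqrt (hfb t ht))
      have h3 := Real.sqrt_pos.2 h1
      have h4 := Real.sq_sqrt h1.le
      have h5 : (3 : ℕ) * Real.sqrt (w t) ^ (3 - 1) * (f t / w t / (2 * Real.sqrt (w t)))
          = 3 / 2 * (f t / Real.sqrt (w t)) := by
        simp only [Nat.add_one_sub_one, Nat.cast_ofNat]
        rw [h4]
        field_simp
      have h6 : f t / Real.sqrt (w t) ≤ Real.sqrt C := (div_le_iff₀ h3).2 h2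
      rw [h5]
      linarith
    · have hid : Tendsto (fun t : ℝ => t) (𝓝[>] 0) (𝓝 0) := nhdsWithin_le_nhds
      simpa using (hid.const_mul (3 / 2 * Real.sqrt C)).sub (hw0.sqrt.pow 3)
  refine ⟨C + K + 3 / 2 * Real.sqrt C, by positivity, fun s hs => ⟨hf s hs, ?_, ?_⟩⟩
  · have h1 := hsq s hs
    have h2 : 0 ≤ 3 / 2 * Real.sqrt C * w s ^ 2 := by positivity
    linarith
  · have h1 := hcub s hs
    have h2 : 0 ≤ (C + K) * s := mul_nonneg (by positivity) hs.1.le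
    linarith

theorem exists_abs_le_mul_of_homogeneous {F Q : Vec N → Vec N → ℝ} {K : Set (Vec N)}
    (hK : IsCompact K)
    (hF : ContinuousOn (fun p : Vec N × Vec N => F p.1 p.2) (K ×ˢ univ))
    (hQ : ContinuousOn (fun p : Vec N × Vec N => Q p.1 p.2) (K ×ˢ univ))
    (hFs : ∀ x v (c : ℝ), F x (c • v) = c ^ 2 * F x v)
    (hQs : ∀ x v (c : ℝ), Q x (c • v) = c ^ 2 * Q x v)
    (hQpos : ∀ x ∈ K, ∀ v, v ≠ 0 → 0 < Q x v) :
    ∃ C > (0 : ℝ), ∀ x ∈ K, ∀ v, |F x v| ≤ C * Q x v := by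
  have hsub : K ×ˢ Metric.sphere (0 : Vec N) 1 ⊆ K ×ˢ univ := prod_mono_right (subset_univ _)
  have hpos : ∀ p ∈ K ×ˢ Metric.sphere (0 : Vec N) 1, 0 < Q p.1 p.2 := fun p hp =>
    hQpos p.1 hp.1 p.2 (ne_zero_of_mem_unit_sphere ⟨p.2, hp.2⟩)
  obtain ⟨C, hC⟩ := (hK.prod (isCompact_sphere (0 : Vec N) 1)).exists_bound_of_continuousOn
    (((hF.mono hsub).div (hQ.mono hsub)) fun p hp => (hpos p hp).ne')
  refine ⟨max C 1, by positivity, fun x hx v => ?_⟩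
  rcases eq_or_ne v 0 with rfl | hv
  · have h1 := hFs x 0 0
    have h2 := hQs x 0 0
    simp only [smul_zero] at h1 h2
    rw [h1, h2]
    simp
  · have hn : ‖v‖ ≠ 0 := norm_ne_zero_iff.2 hv
    have hu : (x, ‖v‖⁻¹ • v) ∈ K ×ˢ Metric.sphere (0 : Vec N) 1 := by
      refine ⟨hx, ?_⟩
      simp [norm_smul, hn]
    have hQu := hpos _ hu
    have h := hC _ hu
    simp only [Pi.div_apply, norm_div, Real.norm_eq_abs, abs_of_pos hQu] at h
    rw [div_le_iff₀ hQu] at h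
    have hv' : v = ‖v‖ • (‖v‖⁻¹ • v) := by rw [smul_smul, mul_inv_cancel₀ hn, one_smul]
    rw [hv', hFs, hQs, abs_mul, abs_of_nonneg (sq_nonneg _)]
    calc ‖v‖ ^ 2 * |F x (‖v‖⁻¹ • v)| ≤ ‖v‖ ^ 2 * (max C 1 * Q x (‖v‖⁻¹ • v)) := by
          gcongr
          exact h.trans (mul_le_mul_of_nonneg_right (le_max_left _ _) hQu.le)
      _ = _ := by ring

theorem fderiv_apply_eq_sum (F : Vec N → ℝ) (x v : Vec N) :
    fderiv ℝ F x v = ∑ i, euclGrad F x i * v i := by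
  conv_lhs => rw [← Finset.univ_sum_single v, map_sum]
  refine Finset.sum_congr rfl fun i _ => ?_
  have h : Pi.single i (v i) = v i • (Pi.single i 1 : Vec N) := by
    rw [← Pi.single_smul]; simp
  rw [h, map_smul, smul_eq_mul, mul_comm]
  rfl

theorem contDiffOn_inv_apply {n : WithTop ℕ∞} {A : Vec N → Matrix (Fin N) (Fin N) ℝ}
    {U : Set (Vec N)}
    (hA : ∀ i j, ContDiffOn ℝ n (fun x => A x i j) U) (hdet : ∀ x ∈ U, (A x).det ≠ 0)
    (i j : Fin N) : ContDiffOn ℝ n (fun x => (A x)⁻¹ i j) U := by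
  have hd : ∀ B : Vec N → Matrix (Fin N) (Fin N) ℝ,
      (∀ i j, ContDiffOn ℝ n (fun x => B x i j) U) → ContDiffOn ℝ n (fun x => (B x).det) U := by
    intro B hB
    simp only [det_apply]
    exact ContDiffOn.sum fun σ _ => (contDiffOn_prod fun k _ => hB _ _).const_smul _
  have heq : ∀ x, (A x)⁻¹ i j
      = ((A x).det)⁻¹ * ((A x).updateRow j (Pi.single i 1)).det := by
    intro x
    rw [inv_def, Matrix.smul_apply, adjugate_apply, Ring.inverse_eq_inv', smul_eq_mul]
  simp only [heq]
  refine ((hd A hA).inv hdet).mul (hd _ fun k l => ?_)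
  rcases eq_or_ne k j with rfl | hk
  · simpa using contDiffOn_const
  · simpa [updateRow_ne hk] using hA k l

namespace Setting

variable (S : Setting N)

theorem prod_eq_dotProduct (x v w : Vec N) : S.prod x v w = v ⬝ᵥ (S.g x *ᵥ w) := by
  simp only [prod, gP, dotProduct, mulVec, Finset.mul_sum]
  exact Finset.sum_congr rfl fun i _ => Finset.sum_congr rfl fun j _ => by ring

theorem prod_symm {x : Vec N} (hx : x ∈ S.U) (v w : Vec N) : S.prod x v w = S.prod x w v := by
  simp only [prod, gP]
  rw [Finset.sum_comm]
  exact Finset.sum_congr rfl fun i _ => Finset.sum_congr rfl fun j _ => by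
    rw [S.hgsymm x hx j i]; ring

theorem prod_add_smul_self {x : Vec N} (hx : x ∈ S.U) (a b : ℝ) (v w : Vec N) :
    S.prod x (a • v + b • w) (a • v + b • w)
      = a ^ 2 * S.prod x v v + 2 * a * b * S.prod x v w + b ^ 2 * S.prod x w w := by
  have h := S.prod_symm hx v w
  simp only [prod_eq_dotProduct] at h ⊢
  simp only [mulVec_add, mulVec_smul, dotProduct_add, add_dotProduct, dotProduct_smul,
    smul_dotProduct, smul_eq_mul]
  rw [← h]
  ring

theorem prod_smul_self (x v : Vec N) (c : ℝ) :
    S.prod x (c • v) (c • v) = c ^ 2 * S.prod x v v := by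
  simp only [prod_eq_dotProduct, mulVec_smul, dotProduct_smul, smul_dotProduct, smul_eq_mul]
  ring

theorem prod_self_nonneg {x : Vec N} (hx : x ∈ S.U) (v : Vec N) : 0 ≤ S.prod x v v := by
  rcases eq_or_ne v 0 with rfl | hv
  · simp [prod_eq_dotProduct]
  · exact (S.hgpos x hx v hv).le

theorem det_ne_zero {x : Vec N} (hx : x ∈ S.U) : (S.g x).det ≠ 0 := by
  intro h
  obtain ⟨v, hv, hgv⟩ := exists_mulVec_eq_zero_iff.2 h
  have := S.hgpos x hx v hv
  rw [← prod, prod_eq_dotProduct, hgv, dotProduct_zero] at this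
  exact lt_irrefl _ this

theorem g_mulVec_grad {x : Vec N} (hx : x ∈ S.U) : S.g x *ᵥ S.grad x = euclGrad S.V x := by
  rw [grad, mulVec_mulVec, mul_nonsing_inv _ (isUnit_iff_ne_zero.2 (S.det_ne_zero hx)),
    one_mulVec]

theorem prod_grad_right {x : Vec N} (hx : x ∈ S.U) (v : Vec N) :
    S.prod x v (S.grad x) = fderiv ℝ S.V x v := by
  rw [prod_eq_dotProduct, S.g_mulVec_grad hx, fderiv_apply_eq_sum, dotProduct_comm]
  rfl

theorem prod_grad_self_pos {x : Vec N} (hx : x ∈ S.U) (h : euclGrad S.V x ≠ 0) :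
    0 < S.prod x (S.grad x) (S.grad x) := by
  refine S.hgpos x hx _ fun h0 => h ?_
  rw [← S.g_mulVec_grad hx, h0, mulVec_zero]

theorem contDiffOn_euclGrad (i : Fin N) :
    ContDiffOn ℝ 1 (fun x => euclGrad S.V x i) S.U :=
  (S.hVC.fderiv_of_isOpen S.hU (by norm_num)).clm_apply contDiffOn_const

theorem contDiffOn_prod_grad_self :
    ContDiffOn ℝ 1 (fun x => S.prod x (S.grad x) (S.grad x)) S.U := by
  have h : ContDiffOn ℝ 1
      (fun x => ∑ i, (∑ j, (S.g x)⁻¹ i j * euclGrad S.V x j) * euclGrad S.V x i) S.U :=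
    ContDiffOn.sum fun i _ => (ContDiffOn.sum fun j _ =>
      (contDiffOn_inv_apply (fun k l => (S.hgC k l).of_le (by norm_num))
        (fun x hx => S.det_ne_zero hx) i j).mul (S.contDiffOn_euclGrad j)).mul
      (S.contDiffOn_euclGrad i)
  refine h.congr fun x hx => ?_
  rw [prod_eq_dotProduct, S.g_mulVec_grad hx]
  rfl

theorem continuousOn_christoffel (k i j : Fin N) :
    ContinuousOn (fun x => S.christoffel x k i j) S.U := by
  have hd : ∀ p q m : Fin N,
      ContinuousOn (fun x => fderiv ℝ (fun y => S.g y p q) x (Pi.single m 1)) S.U := fun p q m =>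
    ((S.hgC p q).continuousOn_fderiv_of_isOpen S.hU (by norm_num)).clm_apply continuousOn_const
  unfold christoffel
  refine continuousOn_const.mul (continuousOn_finsetSum _ fun l _ => ?_)
  exact ((contDiffOn_inv_apply S.hgC (fun x hx => S.det_ne_zero hx) k l).continuousOn).mul
    (((hd l j i).add (hd l i j)).sub (hd i j l))

/-- The covariant Hessian of `V` as a quadratic form. -/
def hessForm (x v : Vec N) : ℝ :=
  ∑ k, fderiv ℝ (fun y => euclGrad S.V y k) x v * v k
    - ∑ k, euclGrad S.V x k * ∑ i, ∑ j, S.christoffel x k i j * v i * v j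

theorem hessForm_smul (x v : Vec N) (c : ℝ) : S.hessForm x (c • v) = c ^ 2 * S.hessForm x v := by
  simp only [hessForm, map_smul, smul_eq_mul, Pi.smul_apply, mul_sub, Finset.mul_sum]
  congr 1
  · exact Finset.sum_congr rfl fun k _ => by ring
  · exact Finset.sum_congr rfl fun k _ => Finset.sum_congr rfl fun i _ =>
      Finset.sum_congr rfl fun j _ => by ring

theorem continuousOn_hessForm :
    ContinuousOn (fun p : Vec N × Vec N => S.hessForm p.1 p.2) (S.U ×ˢ univ) := by
  have hfst : MapsTo (Prod.fst : Vec N × Vec N → Vec N) (S.U ×ˢ univ) S.U := fun p hp => hp.1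
  have hc : ∀ i, ContinuousOn (fun p : Vec N × Vec N => p.2 i) (S.U ×ˢ univ) := fun i =>
    ((continuous_apply i).comp continuous_snd).continuousOn
  unfold hessForm
  refine (continuousOn_finsetSum _ fun k _ => ?_).sub (continuousOn_finsetSum _ fun k _ => ?_)
  · exact ((((S.contDiffOn_euclGrad k).continuousOn_fderiv_of_isOpen S.hU le_rfl).comp
      continuousOn_fst hfst).clm_apply continuousOn_snd).mul (hc k)
  · refine ((S.contDiffOn_euclGrad k).continuousOn.comp continuousOn_fst hfst).mul
      (continuousOn_finsetSum _ fun i _ => continuousOn_finsetSum _ fun j _ => ?_)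
    exact (((S.continuousOn_christoffel k i j).comp continuousOn_fst hfst).mul (hc i)).mul (hc j)

theorem continuousOn_prod_self :
    ContinuousOn (fun p : Vec N × Vec N => S.prod p.1 p.2 p.2) (S.U ×ˢ univ) := by
  have hfst : MapsTo (Prod.fst : Vec N × Vec N → Vec N) (S.U ×ˢ univ) S.U := fun p hp => hp.1
  have hc : ∀ i, ContinuousOn (fun p : Vec N × Vec N => p.2 i) (S.U ×ˢ univ) := fun i =>
    ((continuous_apply i).comp continuous_snd).continuousOn
  unfold prod gP
  refine continuousOn_finsetSum _ fun i _ => continuousOn_finsetSum _ fun j _ => ?_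
  exact (((S.hgC i j).continuousOn.comp continuousOn_fst hfst).mul (hc i)).mul (hc j)

theorem exists_abs_le_mul_prod_self {F : Vec N → Vec N → ℝ}
    (hF : ContinuousOn (fun p : Vec N × Vec N => F p.1 p.2) (S.U ×ˢ univ))
    (hFs : ∀ x v (c : ℝ), F x (c • v) = c ^ 2 * F x v) :
    ∃ C > (0 : ℝ), ∀ x, S.V x ≤ S.E → ∀ v, |F x v| ≤ C * S.prod x v v :=
  exists_abs_le_mul_of_homogeneous S.hcomp (hF.mono (prod_mono_left S.hsub))
    (S.continuousOn_prod_self.mono (prod_mono_left S.hsub)) hFs S.prod_smul_self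
    fun x hx => S.hgpos x (S.hsub hx)

theorem exists_fderiv_sq_le_mul_prod_self {F : Vec N → ℝ} (hF : ContDiffOn ℝ 1 F S.U) :
    ∃ C > (0 : ℝ), ∀ x, S.V x ≤ S.E → ∀ v, fderiv ℝ F x v ^ 2 ≤ C * S.prod x v v := by
  obtain ⟨C, hC, h⟩ := S.exists_abs_le_mul_prod_self (F := fun x v => fderiv ℝ F x v ^ 2)
    ((((hF.continuousOn_fderiv_of_isOpen S.hU le_rfl).comp continuousOn_fst
      fun p hp => hp.1).clm_apply continuousOn_snd).pow 2)
    (fun x v c => by simp only [map_smul, smul_eq_mul]; ring)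
  exact ⟨C, hC, fun x hx v => (le_abs_self _).trans (h x hx v)⟩

end Setting

namespace Setting

variable {S : Setting N} {γ : ℝ → Vec N} {a : ℝ}

namespace IsBdryGeo

theorem mem_U (hγ : S.IsBdryGeo γ a) {s : ℝ} (hs : s ∈ Ioc (0 : ℝ) a) : γ s ∈ S.U :=
  S.hsub (hγ.2.2.2.2.1 s hs).le

theorem hasDerivAt (hγ : S.IsBdryGeo γ a) {s : ℝ} (hs : s ∈ Ioc (0 : ℝ) a) :
    HasDerivAt γ (deriv γ s) s :=
  ((hγ.2.2.1 s hs).differentiableAt (by norm_num)).hasDerivAt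

theorem hasDerivAt_deriv (hγ : S.IsBdryGeo γ a) {s : ℝ} (hs : s ∈ Ioc (0 : ℝ) a) :
    HasDerivAt (deriv γ) (deriv (deriv γ) s) s :=
  (((hγ.2.2.1 s hs).derivWithin (by norm_num : (1 : WithTop ℕ∞) + 1 ≤ 2)).differentiableAt
    (by norm_num)).hasDerivAt

theorem hasDerivAt_comp (hγ : S.IsBdryGeo γ a) {F : Vec N → ℝ} (hF : ContDiffOn ℝ 1 F S.U)
    {s : ℝ} (hs : s ∈ Ioc (0 : ℝ) a) :
    HasDerivAt (fun t => F (γ t)) (fderiv ℝ F (γ s) (deriv γ s)) s :=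
  ((hF.contDiffAt (S.hU.mem_nhds (mem_U hγ hs))).differentiableAt
    (by norm_num)).hasFDerivAt.comp_hasDerivAt s (hasDerivAt hγ hs)

theorem tendsto_comp (hγ : S.IsBdryGeo γ a) {F : Vec N → ℝ} (hF : ContinuousOn F S.U) :
    Tendsto (fun t => F (γ t)) (𝓝[>] 0) (𝓝 (F (γ 0))) := by
  have h0 : γ 0 ∈ S.U := S.hsub hγ.2.2.2.1.le
  have h1 : Tendsto γ (𝓝[>] 0) (𝓝 (γ 0)) := by
    rw [← nhdsWithin_Ioc_eq_nhdsGT hγ.1]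
    exact (hγ.2.1 0 ⟨le_rfl, hγ.1.le⟩).mono_left (nhdsWithin_mono _ Ioc_subset_Icc_self)
  exact (hF.continuousAt (S.hU.mem_nhds h0)).tendsto.comp h1

theorem prod_deriv_self (hγ : S.IsBdryGeo γ a) {s : ℝ} (hs : s ∈ Ioc (0 : ℝ) a) :
    S.prod (γ s) (deriv γ s) (deriv γ s) = 2 / (S.E - S.V (γ s)) := by
  have h := hγ.2.2.2.2.2.2 s hs
  have hw : 0 < S.E - S.V (γ s) := sub_pos.2 (hγ.2.2.2.2.1 s hs)
  rw [eq_div_iff hw.ne']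
  linarith

theorem hasDerivAt_fderiv (hγ : S.IsBdryGeo γ a) {s : ℝ} (hs : s ∈ Ioc (0 : ℝ) a) :
    HasDerivAt (fun t => fderiv ℝ S.V (γ t) (deriv γ t))
      (∑ k, (fderiv ℝ (fun y => euclGrad S.V y k) (γ s) (deriv γ s) * deriv γ s k
        + euclGrad S.V (γ s) k * deriv (deriv γ) s k)) s := by
  simp only [fderiv_apply_eq_sum S.V]
  refine HasDerivAt.fun_sum fun k _ => ?_
  exact (hasDerivAt_comp hγ (S.contDiffOn_euclGrad k) hs).mul
    (hasDerivAt_pi.1 (hasDerivAt_deriv hγ hs) k)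

theorem sum_euclGrad_mul_deriv_deriv (hγ : S.IsBdryGeo γ a) {s : ℝ} (hs : s ∈ Ioc (0 : ℝ) a) :
    (S.E - S.V (γ s)) * ∑ k, (fderiv ℝ (fun y => euclGrad S.V y k) (γ s) (deriv γ s) * deriv γ s k
        + euclGrad S.V (γ s) k * deriv (deriv γ) s k)
      = (S.E - S.V (γ s)) * S.hessForm (γ s) (deriv γ s)
        + fderiv ℝ S.V (γ s) (deriv γ s) ^ 2
        - S.prod (γ s) (S.grad (γ s)) (S.grad (γ s)) / (S.E - S.V (γ s)) := by
  have hU := mem_U hγ hs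
  have hgeo := hγ.2.2.2.2.2.1 s hs
  have hD : S.prod (γ s) (S.grad (γ s)) (deriv γ s) = fderiv ℝ S.V (γ s) (deriv γ s) := by
    rw [S.prod_symm hU, S.prod_grad_right hU]
  have hP := S.prod_grad_right hU (S.grad (γ s))
  have hsum : ∑ k, euclGrad S.V (γ s) k *
      ((S.E - S.V (γ s)) * S.covD γ (deriv γ) (deriv γ) (deriv (deriv γ)) s k
        - fderiv ℝ S.V (γ s) (deriv γ s) * deriv γ s k
        + (1/2) * (2 / (S.E - S.V (γ s))) * S.grad (γ s) k) = 0 := by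
    refine Finset.sum_eq_zero fun k _ => ?_
    rw [← hD, ← prod_deriv_self hγ hs, hgeo k, mul_zero]
  have hexp : ∑ k, euclGrad S.V (γ s) k *
      ((S.E - S.V (γ s)) * S.covD γ (deriv γ) (deriv γ) (deriv (deriv γ)) s k
        - fderiv ℝ S.V (γ s) (deriv γ s) * deriv γ s k
        + (1/2) * (2 / (S.E - S.V (γ s))) * S.grad (γ s) k)
      = (S.E - S.V (γ s)) * ∑ k, euclGrad S.V (γ s) k * deriv (deriv γ) s k
        + (S.E - S.V (γ s)) * ∑ k, euclGrad S.V (γ s) k *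
          ∑ i, ∑ j, S.christoffel (γ s) k i j * deriv γ s i * deriv γ s j
        - fderiv ℝ S.V (γ s) (deriv γ s) * ∑ k, euclGrad S.V (γ s) k * deriv γ s k
        + (1/2) * (2 / (S.E - S.V (γ s))) * ∑ k, euclGrad S.V (γ s) k * S.grad (γ s) k := by
    simp only [Finset.mul_sum _ _ (S.E - S.V (γ s)),
      Finset.mul_sum _ _ (fderiv ℝ S.V (γ s) (deriv γ s)),
      Finset.mul_sum _ _ ((1/2) * (2 / (S.E - S.V (γ s)))),
      ← Finset.sum_add_distrib, ← Finset.sum_sub_distrib]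
    refine Finset.sum_congr rfl fun k _ => ?_
    rw [covD]
    ring
  rw [hexp, ← fderiv_apply_eq_sum S.V _ (deriv γ s),
    ← fderiv_apply_eq_sum S.V _ (S.grad _), ← hP] at hsum
  rw [Finset.sum_add_distrib, hessForm]
  linear_combination hsum

end IsBdryGeo

end Setting

theorem one_sub_le_of_one_sub_le_sq {ρ ε : ℝ} (hρ : 0 ≤ ρ) (hε : 0 ≤ ε) (h : 1 - ε ≤ ρ ^ 2) :
    1 - ρ ≤ ε := by
  by_contra! hlt
  nlinarith

theorem le_mul_rpow_third {x A s : ℝ} (hx : 0 ≤ x) (hA : 0 ≤ A) (hs : 0 ≤ s)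
    (h : x ^ 3 ≤ A * s) : x ≤ A ^ ((1 : ℝ) / 3) * s ^ ((1 : ℝ) / 3) := by
  rw [← Real.mul_rpow hA hs]
  calc x = (x ^ 3) ^ ((1 : ℝ) / 3) := by
        rw [← Real.rpow_natCast, ← Real.rpow_mul hx]; norm_num
    _ ≤ _ := Real.rpow_le_rpow (by positivity) h (by norm_num)

namespace Setting

variable {S : Setting N} {γ : ℝ → Vec N} {a : ℝ}

theorem prod_inv_gnorm_smul_self_le {x : Vec N} (hx : x ∈ S.U) (v : Vec N) :
    S.prod x ((S.gnorm x v)⁻¹ • v) ((S.gnorm x v)⁻¹ • v) ≤ 1 := by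
  rw [prod_smul_self, inv_pow, gnorm, Real.sq_sqrt (S.prod_self_nonneg hx v)]
  exact inv_mul_le_one

theorem gnorm_add_normalized_le {x : Vec N} (hx : x ∈ S.U) (v u : Vec N) :
    S.gnorm x ((S.gnorm x v)⁻¹ • v + (S.gnorm x u)⁻¹ • u) ≤ 2 := by
  have h1 := S.prod_inv_gnorm_smul_self_le hx v
  have h2 := S.prod_inv_gnorm_smul_self_le hx u
  set p := (S.gnorm x v)⁻¹ • v
  set q := (S.gnorm x u)⁻¹ • u
  have h3 := S.prod_add_smul_self hx 1 1 p q
  have h4 := S.prod_add_smul_self hx 1 (-1) p q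
  have h5 := S.prod_self_nonneg hx ((1 : ℝ) • p + (-1 : ℝ) • q)
  simp only [one_smul] at h3
  refine Real.sqrt_le_iff.2 ⟨by norm_num, ?_⟩
  linarith

theorem prod_add_normalized_eq {x : Vec N} (hx : x ∈ S.U) {v u : Vec N}
    (hv : 0 < S.prod x v v) (hu : 0 < S.prod x u u) :
    S.prod x ((S.gnorm x v)⁻¹ • v + (S.gnorm x u)⁻¹ • u)
        ((S.gnorm x v)⁻¹ • v + (S.gnorm x u)⁻¹ • u)
      = 2 * (1 - -S.prod x v u / (Real.sqrt (S.prod x v v) * Real.sqrt (S.prod x u u))) := by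
  have h1 := Real.sqrt_pos.2 hv
  have h2 := Real.sqrt_pos.2 hu
  have h3 := Real.sq_sqrt hv.le
  have h4 := Real.sq_sqrt hu.le
  rw [prod_add_smul_self S hx, gnorm, gnorm, inv_pow, inv_pow, h3, h4, inv_mul_cancel₀ hv.ne',
    inv_mul_cancel₀ hu.ne']
  field_simp
  ring

theorem IsBdryGeo.exists_bound_near_zero (hγ : S.IsBdryGeo γ a) :
    ∃ δ > (0 : ℝ), ∃ C > (0 : ℝ), ∀ s ∈ Ioc (0 : ℝ) δ, s ≤ a →
      S.gnorm (γ s)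
        ((S.gnorm (γ s) (deriv γ s))⁻¹ • deriv γ s
          + (S.gnorm (γ s) (S.grad (γ s)))⁻¹ • S.grad (γ s)) ≤ C * s ^ ((1:ℝ)/3) := by
  obtain ⟨C₁, hC₁, hB⟩ := S.exists_abs_le_mul_prod_self S.continuousOn_hessForm S.hessForm_smul
  obtain ⟨C₂, hC₂, hPd⟩ := S.exists_fderiv_sq_le_mul_prod_self S.contDiffOn_prod_grad_self
  obtain ⟨C₃, hC₃, hVd⟩ := S.exists_fderiv_sq_le_mul_prod_self (S.hVC.of_le one_le_two)
  set C : ℝ := 2 * (C₁ + C₂ + C₃) with hCdef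
  have hC : 0 < C := by positivity
  set w : ℝ → ℝ := fun s => S.E - S.V (γ s) with hwdef
  set P : ℝ → ℝ := fun s => S.prod (γ s) (S.grad (γ s)) (S.grad (γ s)) with hPdef
  have hP0 : 0 < P 0 :=
    S.prod_grad_self_pos (S.hsub hγ.2.2.2.1.le) (S.hreg _ hγ.2.2.2.1)
  have hPt : Tendsto P (𝓝[>] 0) (𝓝 (P 0)) :=
    tendsto_comp hγ S.contDiffOn_prod_grad_self.continuousOn
  have hwt : Tendsto w (𝓝[>] 0) (𝓝 0) := by
    have h := (tendsto_comp hγ S.hVC.continuousOn).const_sub S.E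
    rwa [hγ.2.2.2.1, sub_self] at h
  set c := P 0 / 2 with hcdef
  have hc : 0 < c := half_pos hP0
  obtain ⟨δ, hδ, hδs⟩ : ∃ δ > (0 : ℝ), ∀ s ∈ Ioc (0 : ℝ) δ, s ≤ a ∧ c ≤ P s ∧ C * w s ≤ c / 2 := by
    have h1 : ∀ᶠ s in 𝓝[>] (0 : ℝ), c ≤ P s :=
      hPt.eventually (eventually_ge_nhds (half_lt_self hP0))
    have h2 : ∀ᶠ s in 𝓝[>] (0 : ℝ), C * w s ≤ c / 2 :=
      (hwt.const_mul C).eventually (eventually_le_nhds (by rw [mul_zero]; positivity))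
    have h3 : ∀ᶠ s in 𝓝[>] (0 : ℝ), s ≤ a :=
      mem_of_superset (Ioc_mem_nhdsGT hγ.1) fun s hs => hs.2
    obtain ⟨δ, hδ, h⟩ := mem_nhdsGT_iff_exists_Ioc_subset.1 (h3.and (h1.and h2))
    exact ⟨δ, hδ, fun s hs => h hs⟩
  have hsa : ∀ s ∈ Ioc (0 : ℝ) δ, s ∈ Ioc (0 : ℝ) a := fun s hs => ⟨hs.1, (hδs s hs).1⟩
  have hw : ∀ s ∈ Ioc (0 : ℝ) δ, 0 < w s := fun s hs => sub_pos.2 (hγ.2.2.2.2.1 s (hsa s hs))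
  have hV : ∀ s ∈ Ioc (0 : ℝ) δ, S.V (γ s) ≤ S.E := fun s hs => (hγ.2.2.2.2.1 s (hsa s hs)).le
  have hgw : ∀ s ∈ Ioc (0 : ℝ) δ, S.prod (γ s) (deriv γ s) (deriv γ s) = 2 / w s := fun s hs =>
    prod_deriv_self hγ (hsa s hs)
  have hw' : ∀ s ∈ Ioc (0 : ℝ) δ, HasDerivAt w (-fderiv ℝ S.V (γ s) (deriv γ s)) s :=
    fun s hs => (hasDerivAt_comp hγ (S.hVC.of_le one_le_two) (hsa s hs)).const_sub S.E
  obtain ⟨A, hA, hest⟩ := boundary_layer_estimates (w := w)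
    (f := fun s => -(w s * fderiv ℝ S.V (γ s) (deriv γ s))) (P := P)
    (P' := fun s => fderiv ℝ (fun x => S.prod x (S.grad x) (S.grad x)) (γ s) (deriv γ s))
    (b := fun s => w s * S.hessForm (γ s) (deriv γ s)) (δ := δ) hc hC hw
    (fun s hs => (hw' s hs).congr_deriv (by have := (hw s hs).ne'; field_simp))
    (fun s hs => (((hw' s hs).mul (hasDerivAt_fderiv hγ (hsa s hs))).neg).congr_deriv (by
      have h := sum_euclGrad_mul_deriv_deriv hγ (hsa s hs)
      simp only [hwdef, hPdef]
      linear_combination -h))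
    (fun s hs => hasDerivAt_comp hγ S.contDiffOn_prod_grad_self (hsa s hs))
    (fun s hs => by
      have h := hB _ (hV s hs) (deriv γ s)
      have h1 := hw s hs
      rw [hgw s hs] at h
      rw [abs_mul, abs_of_pos h1]
      calc w s * |S.hessForm (γ s) (deriv γ s)| ≤ w s * (C₁ * (2 / w s)) := by gcongr
        _ = 2 * C₁ := by field_simp
        _ ≤ C := by linarith)
    (fun s hs => by
      have h := hPd _ (hV s hs) (deriv γ s)
      have h1 := hw s hs
      rw [hgw s hs, ← mul_div_assoc] at h
      refine h.trans ?_
      gcongr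
      linarith)
    (fun s hs => by
      have h := hVd _ (hV s hs) (deriv γ s)
      have h1 := hw s hs
      rw [hgw s hs] at h
      rw [neg_sq, mul_pow]
      calc w s ^ 2 * fderiv ℝ S.V (γ s) (deriv γ s) ^ 2 ≤ w s ^ 2 * (C₃ * (2 / w s)) := by gcongr
        _ = 2 * C₃ * w s := by field_simp
        _ ≤ C * w s := by gcongr; linarith)
    (fun s hs => (hδs s hs).2.1) (fun s hs => (hδs s hs).2.2) hwt hPt
  refine ⟨δ, hδ, Real.sqrt (A / c) * A ^ ((1 : ℝ) / 3), by positivity, fun s hs _ => ?_⟩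
  obtain ⟨hf, hsq, hcub⟩ := hest s hs
  have h1 := hw s hs
  have hU := mem_U hγ (hsa s hs)
  have hPs : 0 < P s := hc.trans_le (hδs s hs).2.1
  have hvv : 0 < S.prod (γ s) (deriv γ s) (deriv γ s) := by rw [hgw s hs]; positivity
  have key : S.prod (γ s)
      ((S.gnorm (γ s) (deriv γ s))⁻¹ • deriv γ s
        + (S.gnorm (γ s) (S.grad (γ s)))⁻¹ • S.grad (γ s))
      ((S.gnorm (γ s) (deriv γ s))⁻¹ • deriv γ s
        + (S.gnorm (γ s) (S.grad (γ s)))⁻¹ • S.grad (γ s)) ≤ A / c * w s := by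
    rw [prod_add_normalized_eq hU hvv hPs, S.prod_grad_right hU, hgw s hs]
    have hD : 0 ≤ -fderiv ℝ S.V (γ s) (deriv γ s) := by
      by_contra! h
      nlinarith
    have h2 : 1 - A / (2 * c) * w s ≤ (-fderiv ℝ S.V (γ s) (deriv γ s)
        / (Real.sqrt (2 / w s) * Real.sqrt (P s))) ^ 2 := by
      rw [div_pow, mul_pow, Real.sq_sqrt (by positivity), Real.sq_sqrt hPs.le, neg_sq,
        le_div_iff₀ (by positivity)]
      have h3 : A * w s ≤ A / c * w s * P s := by
        calc A * w s = A / c * w s * c := by field_simp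
          _ ≤ _ := by gcongr; exact (hδs s hs).2.1
      have h4 : (1 - A / (2 * c) * w s) * (2 / w s * P s)
          = (2 * w s * P s - (A / c * w s * P s) * w s) / w s ^ 2 := by
        field_simp
      rw [h4, div_le_iff₀ (by positivity)]
      have h5 : A * w s * w s ≤ A / c * w s * P s * w s := by gcongr
      nlinarith
    have h6 := one_sub_le_of_one_sub_le_sq (by positivity) (by positivity) h2
    calc _ ≤ 2 * (A / (2 * c) * w s) := by gcongr
      _ = _ := by field_simp
  calc _ ≤ Real.sqrt (A / c * w s) := Real.sqrt_le_sqrt key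
    _ = Real.sqrt (A / c) * Real.sqrt (w s) := Real.sqrt_mul (by positivity) _
    _ ≤ Real.sqrt (A / c) * (A ^ ((1 : ℝ) / 3) * s ^ ((1 : ℝ) / 3)) := by
        gcongr
        exact le_mul_rpow_third (Real.sqrt_nonneg _) hA.le hs.1.le hcub
    _ = _ := by ring

end Setting

/-- **Corollary 4.4**: along an arclength-parameterized `g_*`-geodesic starting at the
boundary of the well, `γ̇/‖γ̇‖ = −∇V(γ)/‖∇V(γ)‖ + Σ(s)` with `‖Σ(s)‖ ≤ C₀ s^{1/3}`. -/
theorem normal_behavior {N : ℕ} (S : Setting N) (γ : ℝ → Vec N) (a : ℝ)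
    (hγ : S.IsBdryGeo γ a) :
    ∃ C₀ > (0:ℝ), ∀ s ∈ Ioc (0:ℝ) a,
      S.gnorm (γ s)
        ((S.gnorm (γ s) (deriv γ s))⁻¹ • deriv γ s
          + (S.gnorm (γ s) (S.grad (γ s)))⁻¹ • S.grad (γ s)) ≤ C₀ * s ^ ((1:ℝ)/3) := by
  obtain ⟨δ, hδ, C, hC, h⟩ := Setting.IsBdryGeo.exists_bound_near_zero hγ
  have hδ' : 0 < δ ^ ((1 : ℝ) / 3) := Real.rpow_pos_of_pos hδ _
  refine ⟨C + 2 / δ ^ ((1 : ℝ) / 3), by positivity, fun s hs => ?_⟩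
  have hs' : 0 < s ^ ((1 : ℝ) / 3) := Real.rpow_pos_of_pos hs.1 _
  rw [add_mul]
  rcases le_total s δ with hsδ | hsδ
  · have h1 : 0 ≤ 2 / δ ^ ((1 : ℝ) / 3) * s ^ ((1 : ℝ) / 3) := by positivity
    linarith [h s ⟨hs.1, hsδ⟩ hs.2]
  · have h1 := S.gnorm_add_normalized_le (Setting.IsBdryGeo.mem_U hγ hs) (deriv γ s) (S.grad (γ s))
    have h2 : δ ^ ((1 : ℝ) / 3) ≤ s ^ ((1 : ℝ) / 3) :=
      Real.rpow_le_rpow hδ.le hsδ (by norm_num)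
    have h3 : 2 ≤ 2 / δ ^ ((1 : ℝ) / 3) * s ^ ((1 : ℝ) / 3) := by
      rw [div_mul_eq_mul_div, le_div_iff₀ hδ']
      linarith
    have h4 : 0 ≤ C * s ^ ((1 : ℝ) / 3) := by positivity
    linarith

end
end JacobiPaper
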